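/- Let λ ≥ 1/π and set α = 1/2 + i·arcosh(λπ)/π ∈ ℂ, so that sin(πα) = λπ. For x ≥ 0 define F_α(x) := (1/(Γ(1−α)Γ(1+α))) ∫₀¹ u^{−α}(1−u)^{α}(1+xu)^{−α} du (complex powers taken with the principal branch). Then F_α(x) is real for every x ≥ 0, and for any μ > 0 the real-valued function J(x) := x·F_α(x/μ²) satisfies J(x) = x − λ x² ∫₀^∞ J(t)/((t+μ²)²(t+μ²+x)) dt for every x ≥ 0, the integral converging absolutely. -/

import Mathlib

open MeasureTheory Real Set

/-- The inverse hyperbolic cosine. -/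
noncomputable def arcosh (x : ℝ) : ℝ := Real.log (x + Real.sqrt (x^2 - 1))

/-- The Gauss hypergeometric function `₂F₁(α, 1-α; 2; -x)` for complex parameter `α`
and real `x ≥ 0`, via its Euler integral with principal-branch complex powers. -/
noncomputable def FhypC (α : ℂ) (x : ℝ) : ℂ :=
  (1 / (Complex.Gamma (1 - α) * Complex.Gamma (1 + α))) *
    ∫ u in (0:ℝ)..1, (u:ℂ) ^ (-α) * ((1:ℂ) - u) ^ α * ((1:ℂ) + x * u) ^ (-α)

/-- The integrand of the Euler integral defining `FhypC α x`. -/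
noncomputable def eulerIntegrand (α : ℂ) (x u : ℝ) : ℂ :=
  (u : ℂ) ^ (-α) * ((1 - u : ℝ) : ℂ) ^ α * ((1 + x * u : ℝ) : ℂ) ^ (-α)

theorem FhypC_eq_setIntegral (α : ℂ) (x : ℝ) :
    FhypC α x = (1 / (Complex.Gamma (1 - α) * Complex.Gamma (1 + α))) *
      ∫ u in Ioo (0 : ℝ) 1, eulerIntegrand α x u := by
  rw [FhypC, intervalIntegral.integral_of_le zero_le_one, integral_Ioc_eq_integral_Ioo]
  simp [eulerIntegrand]

theorem ofReal_cpow_eq_exp_log {a : ℝ} (ha : 0 < a) (z : ℂ) :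
    (a : ℂ) ^ z = Complex.exp (Real.log a * z) := by
  rw [Complex.cpow_def_of_ne_zero (by exact_mod_cast ha.ne'), Complex.ofReal_log ha.le]

theorem ofReal_mul_cpow {a b : ℝ} (ha : 0 < a) (hb : 0 < b) (z : ℂ) :
    ((a * b : ℝ) : ℂ) ^ z = (a : ℂ) ^ z * (b : ℂ) ^ z := by
  rw [Complex.ofReal_mul, Complex.mul_cpow_ofReal_nonneg ha.le hb.le]

theorem ofReal_div_cpow {a b : ℝ} (ha : 0 < a) (hb : 0 < b) (z : ℂ) :
    ((a / b : ℝ) : ℂ) ^ z = (a : ℂ) ^ z * (b : ℂ) ^ (-z) := by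
  rw [ofReal_cpow_eq_exp_log (div_pos ha hb), ofReal_cpow_eq_exp_log ha,
    ofReal_cpow_eq_exp_log hb, ← Complex.exp_add, Real.log_div ha.ne' hb.ne']
  push_cast
  ring_nf

theorem conj_ofReal_cpow {a : ℝ} (ha : 0 < a) (z : ℂ) :
    (starRingEnd ℂ) ((a : ℂ) ^ z) = (a : ℂ) ^ (starRingEnd ℂ z) := by
  rw [ofReal_cpow_eq_exp_log ha, ofReal_cpow_eq_exp_log ha, ← Complex.exp_conj, map_mul,
    Complex.conj_ofReal]

theorem ofReal_cpow_mul_cpow_neg {a : ℝ} (ha : 0 < a) (z : ℂ) :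
    (a : ℂ) ^ z * (a : ℂ) ^ (-z) = 1 := by
  have : (a : ℂ) ≠ 0 := by exact_mod_cast ha.ne'
  rw [← Complex.cpow_add _ _ this, add_neg_cancel, Complex.cpow_zero]

theorem integrableOn_cpow_mul_one_sub_cpow {a b : ℂ} (ha : -1 < a.re) (hb : -1 < b.re) :
    IntegrableOn (fun u : ℝ => (u : ℂ) ^ a * ((1 - u : ℝ) : ℂ) ^ b) (Ioo 0 1) := by
  have h := Complex.betaIntegral_convergent (u := a + 1) (v := b + 1)
    (by simp; linarith) (by simp; linarith)
  rw [intervalIntegrable_iff_integrableOn_Ioo_of_le zero_le_one] at h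
  simpa using h

theorem integral_cpow_mul_one_sub_cpow {a b : ℂ} (ha : -1 < a.re) (hb : -1 < b.re) :
    Complex.Gamma (a + b + 2) *
      ∫ u in Ioo (0 : ℝ) 1, (u : ℂ) ^ a * ((1 - u : ℝ) : ℂ) ^ b =
    Complex.Gamma (a + 1) * Complex.Gamma (b + 1) := by
  rw [Complex.Gamma_mul_Gamma_eq_betaIntegral (by simp; linarith) (by simp; linarith),
    Complex.betaIntegral, intervalIntegral.integral_of_le zero_le_one,
    integral_Ioc_eq_integral_Ioo]
  simp only [add_sub_cancel_right, Complex.ofReal_sub, Complex.ofReal_one]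
  ring_nf

theorem integrableOn_eulerIntegrand {α : ℂ} (h₀ : -1 < α.re) (h₁ : α.re < 1) {x : ℝ}
    (hx : 0 ≤ x) : IntegrableOn (eulerIntegrand α x) (Ioo 0 1) := by
  have hmeas : Measurable fun u : ℝ => ((1 + x * u : ℝ) : ℂ) ^ (-α) := by fun_prop
  obtain ⟨c, hc⟩ : ∃ c, ∀ u ∈ Icc (0 : ℝ) 1, ‖((1 + x * u : ℝ) : ℂ) ^ (-α)‖ ≤ c := by
    refine isCompact_Icc.exists_bound_of_continuousOn fun u hu => ?_
    refine ContinuousAt.continuousWithinAt ?_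
    refine ContinuousAt.cpow (by fun_prop) (by fun_prop) ?_
    have : 0 ≤ x * u := mul_nonneg hx hu.1
    exact Complex.ofReal_mem_slitPlane.2 (by linarith)
  refine Integrable.mul_bdd (c := c)
    (integrableOn_cpow_mul_one_sub_cpow (a := -α) (b := α) (by simpa using h₁) h₀)
    hmeas.aestronglyMeasurable ?_
  filter_upwards [ae_restrict_mem measurableSet_Ioo] with u hu
  exact hc u (Ioo_subset_Icc_self hu)

theorem FhypC_zero {α : ℂ} (h₀ : -1 < α.re) (h₁ : α.re < 1) : FhypC α 0 = 1 := by
  have h := integral_cpow_mul_one_sub_cpow (a := -α) (b := α) (by simpa using h₁) h₀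
  have hG : Complex.Gamma 2 = 1 := by
    rw [← one_add_one_eq_two, Complex.Gamma_add_one 1 one_ne_zero, Complex.Gamma_one, mul_one]
  rw [neg_add_cancel, zero_add, hG, one_mul, neg_add_eq_sub, add_comm α] at h
  rw [FhypC_eq_setIntegral]
  simp only [eulerIntegrand, zero_mul, add_zero, Complex.ofReal_one, Complex.one_cpow, mul_one]
  rw [h]
  refine one_div_mul_cancel (mul_ne_zero ?_ ?_) <;>
    refine Complex.Gamma_ne_zero_of_re_pos ?_ <;> simp <;> linarith

/-- The involution `w ↦ (1 - w) / (1 + x w)` of the unit interval. -/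
noncomputable def eulerInvolution (x w : ℝ) : ℝ := (1 - w) / (1 + x * w)

section Involution

variable {x w : ℝ}

theorem one_add_mul_pos (hx : 0 ≤ x) (hw : 0 < w) : 0 < 1 + x * w := by positivity

theorem one_sub_eulerInvolution (hx : 0 ≤ x) (hw : 0 < w) :
    1 - eulerInvolution x w = w * (1 + x) / (1 + x * w) := by
  have := (one_add_mul_pos hx hw).ne'
  rw [eulerInvolution]
  field_simp
  ring

theorem one_add_mul_eulerInvolution (hx : 0 ≤ x) (hw : 0 < w) :
    1 + x * eulerInvolution x w = (1 + x) / (1 + x * w) := by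
  have := (one_add_mul_pos hx hw).ne'
  rw [eulerInvolution]
  field_simp
  ring

theorem eulerInvolution_mem_Ioo (hx : 0 ≤ x) (hw : w ∈ Ioo (0 : ℝ) 1) :
    eulerInvolution x w ∈ Ioo (0 : ℝ) 1 := by
  have hp := one_add_mul_pos hx hw.1
  refine ⟨div_pos (by linarith [hw.2]) hp, ?_⟩
  have : 0 < 1 - eulerInvolution x w := by
    rw [one_sub_eulerInvolution hx hw.1]
    have := hw.1
    positivity
  linarith

theorem eulerInvolution_eulerInvolution (hx : 0 ≤ x) (hw : w ∈ Ioo (0 : ℝ) 1) :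
    eulerInvolution x (eulerInvolution x w) = w := by
  have := (one_add_mul_pos hx hw.1).ne'
  rw [eulerInvolution, one_sub_eulerInvolution hx hw.1, one_add_mul_eulerInvolution hx hw.1,
    div_div_div_cancel_right₀ this, mul_div_cancel_right₀ _ (by positivity)]

theorem image_eulerInvolution (hx : 0 ≤ x) :
    eulerInvolution x '' Ioo (0 : ℝ) 1 = Ioo (0 : ℝ) 1 := by
  ext u
  constructor
  · rintro ⟨w, hw, rfl⟩
    exact eulerInvolution_mem_Ioo hx hw
  · intro hu
    exact ⟨_, eulerInvolution_mem_Ioo hx hu, eulerInvolution_eulerInvolution hx hu⟩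

theorem injOn_eulerInvolution (hx : 0 ≤ x) : InjOn (eulerInvolution x) (Ioo (0 : ℝ) 1) :=
  fun a ha b hb h => by
    rw [← eulerInvolution_eulerInvolution hx ha, h, eulerInvolution_eulerInvolution hx hb]

theorem hasDerivAt_eulerInvolution (hx : 0 ≤ x) (hw : 0 < w) :
    HasDerivAt (eulerInvolution x) (-((1 + x) / (1 + x * w) ^ 2)) w := by
  have := (one_add_mul_pos hx hw).ne'
  have h := ((hasDerivAt_id w).const_sub 1).div
    (((hasDerivAt_id w).const_mul x).const_add 1) this
  refine h.congr_deriv ?_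
  simp only [id]
  field_simp
  ring

theorem abs_deriv_smul_eulerIntegrand (α : ℂ) (hx : 0 ≤ x) (hw : w ∈ Ioo (0 : ℝ) 1) :
    |-((1 + x) / (1 + x * w) ^ 2)| • eulerIntegrand α x (eulerInvolution x w) =
      ((1 + x) / (1 + x * w) ^ 2 : ℝ) *
        ((w : ℂ) ^ α * ((eulerInvolution x w : ℝ) : ℂ) ^ (-α)) := by
  have hp := one_add_mul_pos hx hw.1
  have hx1 : 0 < 1 + x := by linarith
  have hE := (eulerInvolution_mem_Ioo hx hw).1
  rw [abs_neg, abs_of_nonneg (by positivity), Complex.real_smul, eulerIntegrand,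
    one_sub_eulerInvolution hx hw.1, one_add_mul_eulerInvolution hx hw.1,
    ofReal_div_cpow (mul_pos hw.1 hx1) hp, ofReal_mul_cpow hw.1 hx1, ofReal_div_cpow hx1 hp,
    neg_neg]
  linear_combination ((1 + x) / (1 + x * w) ^ 2 : ℝ) *
        ((w : ℂ) ^ α * ((eulerInvolution x w : ℝ) : ℂ) ^ (-α)) *
    ((((1 + x * w : ℝ) : ℂ) ^ α * ((1 + x * w : ℝ) : ℂ) ^ (-α)) *
      ofReal_cpow_mul_cpow_neg hx1 α + ofReal_cpow_mul_cpow_neg hp α)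

theorem conj_eulerIntegrand {α : ℂ} (hα : (starRingEnd ℂ) α = 1 - α) (hx : 0 ≤ x)
    (hw : w ∈ Ioo (0 : ℝ) 1) :
    (starRingEnd ℂ) (eulerIntegrand α x w) =
      (w : ℂ) ^ (α - 1) * ((eulerInvolution x w : ℝ) : ℂ) ^ (1 - α) := by
  have hp := one_add_mul_pos hx hw.1
  have h1 : 0 < 1 - w := by linarith [hw.2]
  rw [eulerIntegrand, eulerInvolution, map_mul, map_mul, conj_ofReal_cpow hw.1,
    conj_ofReal_cpow h1, conj_ofReal_cpow hp, ofReal_div_cpow h1 hp, map_neg, hα]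
  ring_nf

end Involution

theorem mul_conj_integral_eulerIntegrand {α : ℂ} (hre : α.re = 1 / 2)
    (hα : (starRingEnd ℂ) α = 1 - α) {x : ℝ} (hx : 0 ≤ x) :
    α * (starRingEnd ℂ) (∫ u in Ioo (0 : ℝ) 1, eulerIntegrand α x u) =
      (1 - α) * ∫ u in Ioo (0 : ℝ) 1, eulerIntegrand α x u := by
  have hα0 : α ≠ 0 := by rintro rfl; norm_num at hre
  have hα1 : 1 - α ≠ 0 := by rw [← hα]; simpa using hα0
  have hint := integrableOn_eulerIntegrand (α := α) (by linarith) (by linarith) hx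
  have hderiv : ∀ w ∈ Ioo (0 : ℝ) 1, HasDerivWithinAt (eulerInvolution x)
      (-((1 + x) / (1 + x * w) ^ 2)) (Ioo 0 1) w :=
    fun w hw => (hasDerivAt_eulerInvolution hx hw.1).hasDerivWithinAt
  have hconj : IntegrableOn (fun w : ℝ => (w : ℂ) ^ (α - 1) *
      ((eulerInvolution x w : ℝ) : ℂ) ^ (1 - α)) (Ioo 0 1) :=
    IntegrableOn.congr_fun (f := fun w => (starRingEnd ℂ) (eulerIntegrand α x w))
      ((LinearIsometryEquiv.integrable_comp_iff (Complex.conjLIE)).2 hint)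
      (fun w hw => conj_eulerIntegrand hα hx hw) measurableSet_Ioo
  have hsub : IntegrableOn (fun w : ℝ => (((1 + x) / (1 + x * w) ^ 2 : ℝ) : ℂ) *
      ((w : ℂ) ^ α * ((eulerInvolution x w : ℝ) : ℂ) ^ (-α))) (Ioo 0 1) := by
    have h := (integrableOn_image_iff_integrableOn_abs_deriv_smul measurableSet_Ioo hderiv
      (injOn_eulerInvolution hx) (eulerIntegrand α x)).1
      (by rwa [image_eulerInvolution hx])
    exact h.congr_fun (fun w hw => abs_deriv_smul_eulerIntegrand α hx hw) measurableSet_Ioo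
  have hI : ∫ u in Ioo (0 : ℝ) 1, eulerIntegrand α x u =
      ∫ w in Ioo (0 : ℝ) 1, (((1 + x) / (1 + x * w) ^ 2 : ℝ) : ℂ) *
        ((w : ℂ) ^ α * ((eulerInvolution x w : ℝ) : ℂ) ^ (-α)) := by
    conv_lhs => rw [← image_eulerInvolution hx]
    rw [integral_image_eq_integral_abs_deriv_smul measurableSet_Ioo hderiv
      (injOn_eulerInvolution hx)]
    exact setIntegral_congr_fun measurableSet_Ioo
      fun w hw => abs_deriv_smul_eulerIntegrand α hx hw
  have hIc : (starRingEnd ℂ) (∫ u in Ioo (0 : ℝ) 1, eulerIntegrand α x u) =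
      ∫ w in Ioo (0 : ℝ) 1, (w : ℂ) ^ (α - 1) *
        ((eulerInvolution x w : ℝ) : ℂ) ^ (1 - α) := by
    rw [← integral_conj]
    exact setIntegral_congr_fun measurableSet_Ioo fun w hw => conj_eulerIntegrand hα hx hw
  have hcont : ContinuousOn (fun w : ℝ => (w : ℂ) ^ α *
      ((eulerInvolution x w : ℝ) : ℂ) ^ (1 - α)) (Icc 0 1) := by
    have hE : ContinuousOn (eulerInvolution x) (Icc 0 1) := by
      unfold eulerInvolution
      refine ContinuousOn.div (by fun_prop) (by fun_prop) fun w hw => ?_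
      have := mul_nonneg hx hw.1
      positivity
    have hpow : ∀ z : ℂ, 0 < z.re → Continuous fun y : ℝ => (y : ℂ) ^ z :=
      fun z hz => Complex.continuous_ofReal_cpow_const hz
    exact (hpow α (by rw [hre]; norm_num)).continuousOn.mul
      ((hpow (1 - α) (by simp [hre]; norm_num)).comp_continuousOn hE)
  have hftc := intervalIntegral.integral_eq_sub_of_hasDerivAt_of_le zero_le_one hcont
    (f' := fun w : ℝ => α * ((w : ℂ) ^ (α - 1) * ((eulerInvolution x w : ℝ) : ℂ) ^ (1 - α)) -
      (1 - α) * ((((1 + x) / (1 + x * w) ^ 2 : ℝ) : ℂ) *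
      ((w : ℂ) ^ α * ((eulerInvolution x w : ℝ) : ℂ) ^ (-α))))
    (fun w hw => by
      have hE := (eulerInvolution_mem_Ioo hx hw).1
      have h1 := hasDerivAt_ofReal_cpow_const hw.1.ne' hα0
      have h2 := (hasDerivAt_ofReal_cpow_const hE.ne' hα1).scomp w
        (hasDerivAt_eulerInvolution hx hw.1)
      refine (h1.mul h2).congr_deriv ?_
      simp only [Function.comp_apply, Complex.real_smul, sub_sub_cancel_left]
      push_cast
      ring)
    (by
      rw [intervalIntegrable_iff_integrableOn_Ioo_of_le zero_le_one]
      exact (hconj.const_mul α).sub (hsub.const_mul (1 - α)))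
  rw [intervalIntegral.integral_of_le zero_le_one, integral_Ioc_eq_integral_Ioo,
    integral_sub (hconj.const_mul α) (hsub.const_mul (1 - α)), integral_const_mul,
    integral_const_mul, ← hI, ← hIc] at hftc
  simp only [eulerInvolution, sub_self, zero_div, Complex.ofReal_zero, Complex.zero_cpow hα0,
    Complex.zero_cpow hα1, mul_zero, zero_mul] at hftc
  exact sub_eq_zero.1 hftc

theorem conj_FhypC {α : ℂ} (hre : α.re = 1 / 2) {x : ℝ} (hx : 0 ≤ x) :
    (starRingEnd ℂ) (FhypC α x) = FhypC α x := by
  have hα : (starRingEnd ℂ) α = 1 - α := by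
    apply Complex.ext <;> simp [hre]
    norm_num
  have hα0 : α ≠ 0 := by rintro rfl; norm_num at hre
  have hα1 : 1 - α ≠ 0 := by rw [← hα]; simpa using hα0
  have hG1 : Complex.Gamma (1 - α) ≠ 0 :=
    Complex.Gamma_ne_zero_of_re_pos (by simp [hre]; norm_num)
  have hG0 : Complex.Gamma α ≠ 0 := Complex.Gamma_ne_zero_of_re_pos (by simp [hre])
  have hI := mul_conj_integral_eulerIntegrand hre hα hx
  have hI' : (starRingEnd ℂ) (∫ u in Ioo (0 : ℝ) 1, eulerIntegrand α x u) =
      (1 - α) * (∫ u in Ioo (0 : ℝ) 1, eulerIntegrand α x u) / α := by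
    rw [eq_div_iff hα0, mul_comm, hI]
  rw [FhypC_eq_setIntegral, map_mul, hI', map_div₀, map_one, map_mul, ← Complex.Gamma_conj,
    ← Complex.Gamma_conj, map_sub, map_add, map_one, hα, sub_sub_cancel, add_comm 1 (1 - α),
    Complex.Gamma_add_one _ hα1, add_comm 1 α, Complex.Gamma_add_one _ hα0]
  field_simp

/-- The kernel whose integrals over `s` and over `u` link the Euler integral to its Stieltjes
representation. -/
noncomputable def stieltjesKernel (α : ℂ) (x u s : ℝ) : ℂ :=
  if 1 < u * (1 + s) then
    (u : ℂ) ^ (-α) * ((1 - u : ℝ) : ℂ) ^ α *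
      (((u * (1 + s) - 1 : ℝ) : ℂ) ^ (-α) / ((1 + s + x : ℝ) : ℂ))
  else 0

theorem measurable_uncurry_stieltjesKernel (α : ℂ) (x : ℝ) :
    Measurable (Function.uncurry (stieltjesKernel α x)) := by
  unfold stieltjesKernel Function.uncurry
  refine Measurable.ite (measurableSet_lt (by fun_prop) (by fun_prop)) ?_ measurable_const
  fun_prop

/-- The parametrization of `(1/u - 1, ∞)` by the unit interval that turns the Stieltjes integral
into a beta integral. -/
noncomputable def stieltjesParam (x u v : ℝ) : ℝ := (1 + (1 + x * u) * (v / (1 - v))) / u - 1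

section Slices

variable {x u s v : ℝ}

theorem image_stieltjesParam (hx : 0 ≤ x) (hu : 0 < u) :
    stieltjesParam x u '' Ioo (0 : ℝ) 1 = Ioi (1 / u - 1) := by
  have hA := one_add_mul_pos hx hu
  ext s
  constructor
  · rintro ⟨v, hv, rfl⟩
    have h1 : 0 < 1 - v := by linarith [hv.2]
    have h2 : 0 < v / (1 - v) := div_pos hv.1 h1
    rw [mem_Ioi, stieltjesParam]
    gcongr
    nlinarith [mul_pos hA h2]
  · intro hs
    have hr : 0 < u * (1 + s) - 1 := by
      rw [mem_Ioi, sub_lt_iff_lt_add, div_lt_iff₀ hu] at hs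
      linarith
    have hB : 0 < (1 + x * u) + (u * (1 + s) - 1) := by linarith
    refine ⟨(u * (1 + s) - 1) / ((1 + x * u) + (u * (1 + s) - 1)), ⟨div_pos hr hB, ?_⟩, ?_⟩
    · rw [div_lt_one hB]
      linarith
    · have h1 : 1 - (u * (1 + s) - 1) / ((1 + x * u) + (u * (1 + s) - 1)) =
          (1 + x * u) / ((1 + x * u) + (u * (1 + s) - 1)) := by
        rw [eq_div_iff hB.ne', sub_mul, div_mul_cancel₀ _ hB.ne']
        ring
      rw [stieltjesParam, h1, div_div_div_cancel_right₀ hB.ne', mul_div_cancel₀ _ hA.ne']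
      field_simp
      ring

theorem hasDerivAt_stieltjesParam (hv : v < 1) :
    HasDerivAt (stieltjesParam x u) ((1 + x * u) / (1 - v) ^ 2 / u) v := by
  have h1 : 1 - v ≠ 0 := by linarith
  have h := ((((hasDerivAt_id v).div ((hasDerivAt_id v).const_sub 1) h1).const_mul
    (1 + x * u)).const_add 1).div_const u |>.sub_const 1
  refine h.congr_deriv ?_
  simp only [id]
  congr 1
  field_simp
  ring

theorem injOn_stieltjesParam (hx : 0 ≤ x) (hu : 0 < u) :
    InjOn (stieltjesParam x u) (Ioo (0 : ℝ) 1) := by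
  intro a ha b hb h
  have hA := one_add_mul_pos hx hu
  have ha1 : 1 - a ≠ 0 := by linarith [ha.2]
  have hb1 : 1 - b ≠ 0 := by linarith [hb.2]
  rw [stieltjesParam, stieltjesParam, sub_left_inj, div_left_inj' hu.ne', add_right_inj,
    mul_right_inj' hA.ne', div_eq_div_iff ha1 hb1] at h
  linarith

theorem abs_deriv_smul_stieltjesParam (α : ℂ) (hx : 0 ≤ x) (hu : 0 < u)
    (hv : v ∈ Ioo (0 : ℝ) 1) :
    |(1 + x * u) / (1 - v) ^ 2 / u| •
      (((u * (1 + stieltjesParam x u v) - 1 : ℝ) : ℂ) ^ (-α) /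
        ((1 + stieltjesParam x u v + x : ℝ) : ℂ)) =
      ((1 + x * u : ℝ) : ℂ) ^ (-α) * ((v : ℂ) ^ (-α) * ((1 - v : ℝ) : ℂ) ^ (α - 1)) := by
  have hA := one_add_mul_pos hx hu
  have h1 : 0 < 1 - v := by linarith [hv.2]
  have h2 : 0 < v / (1 - v) := div_pos hv.1 h1
  have e1 : u * (1 + stieltjesParam x u v) - 1 = (1 + x * u) * (v / (1 - v)) := by
    rw [stieltjesParam]
    field_simp
    ring
  have e2 : 1 + stieltjesParam x u v + x = (1 + x * u) / (1 - v) / u := by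
    rw [stieltjesParam]
    field_simp
    ring
  have e3 : ((1 - v : ℝ) : ℂ) ^ (α - 1) = ((1 - v : ℝ) : ℂ) ^ α / ((1 - v : ℝ) : ℂ) := by
    rw [Complex.cpow_sub _ _ (by exact_mod_cast h1.ne'), Complex.cpow_one]
  rw [e1, e2, e3, ofReal_mul_cpow hA h2, ofReal_div_cpow hv.1 h1, neg_neg,
    abs_of_nonneg (by positivity), Complex.real_smul]
  generalize ((1 + x * u : ℝ) : ℂ) ^ (-α) = a
  generalize ((1 - v : ℝ) : ℂ) ^ α = b
  have hAc : ((1 + x * u : ℝ) : ℂ) ≠ 0 := by exact_mod_cast hA.ne'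
  have h1c : ((1 - v : ℝ) : ℂ) ≠ 0 := by exact_mod_cast h1.ne'
  have huc : (u : ℂ) ≠ 0 := by exact_mod_cast hu.ne'
  rw [Complex.ofReal_div, Complex.ofReal_div, Complex.ofReal_div, Complex.ofReal_div,
    Complex.ofReal_pow]
  field_simp

theorem stieltjesKernel_eq_indicator (α : ℂ) (hu : 0 < u) :
    stieltjesKernel α x u = (Ioi (1 / u - 1)).indicator fun s =>
      (u : ℂ) ^ (-α) * ((1 - u : ℝ) : ℂ) ^ α *
        (((u * (1 + s) - 1 : ℝ) : ℂ) ^ (-α) / ((1 + s + x : ℝ) : ℂ)) := by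
  ext s
  have : 1 < u * (1 + s) ↔ s ∈ Ioi (1 / u - 1) := by
    rw [mem_Ioi, sub_lt_iff_lt_add, div_lt_iff₀ hu, mul_comm, add_comm]
  simp only [stieltjesKernel, indicator, this]

theorem Ioi_zero_inter_Ioi_one_div_sub_one (hu : u ∈ Ioo (0 : ℝ) 1) :
    Ioi 0 ∩ Ioi (1 / u - 1) = Ioi (1 / u - 1) := by
  refine inter_eq_right.2 (Ioi_subset_Ioi ?_)
  have := (one_lt_div hu.1).2 hu.2
  linarith

theorem integrableOn_stieltjesKernel {α : ℂ} (h₀ : 0 < α.re) (h₁ : α.re < 1) (hx : 0 ≤ x)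
    (hu : u ∈ Ioo (0 : ℝ) 1) : IntegrableOn (stieltjesKernel α x u) (Ioi 0) := by
  rw [stieltjesKernel_eq_indicator α hu.1, IntegrableOn,
    integrable_indicator_iff measurableSet_Ioi, IntegrableOn,
    Measure.restrict_restrict measurableSet_Ioi, inter_comm,
    Ioi_zero_inter_Ioi_one_div_sub_one hu]
  refine Integrable.const_mul ?_ _
  rw [← image_stieltjesParam hx hu.1]
  refine (integrableOn_image_iff_integrableOn_abs_deriv_smul measurableSet_Ioo
    (fun v hv => (hasDerivAt_stieltjesParam hv.2).hasDerivWithinAt)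
    (injOn_stieltjesParam hx hu.1) _).2 ?_
  refine IntegrableOn.congr_fun ?_
    (fun v hv => (abs_deriv_smul_stieltjesParam α hx hu.1 hv).symm) measurableSet_Ioo
  exact (integrableOn_cpow_mul_one_sub_cpow (by simpa using h₁) (by simpa using h₀)).const_mul _

theorem integral_stieltjesKernel {α : ℂ} (h₀ : 0 < α.re) (h₁ : α.re < 1) (hx : 0 ≤ x)
    (hu : u ∈ Ioo (0 : ℝ) 1) :
    ∫ s in Ioi 0, stieltjesKernel α x u s =
      eulerIntegrand α x u * (π / Complex.sin (π * α)) := by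
  have hbeta := integral_cpow_mul_one_sub_cpow (a := -α) (b := α - 1)
    (by simpa using h₁) (by simpa using h₀)
  rw [show -α + (α - 1) + 2 = 1 by ring, Complex.Gamma_one, one_mul, neg_add_eq_sub,
    sub_add_cancel, mul_comm (Complex.Gamma _), Complex.Gamma_mul_Gamma_one_sub] at hbeta
  rw [stieltjesKernel_eq_indicator α hu.1, setIntegral_indicator measurableSet_Ioi,
    Ioi_zero_inter_Ioi_one_div_sub_one hu, integral_const_mul, ← image_stieltjesParam hx hu.1,
    integral_image_eq_integral_abs_deriv_smul measurableSet_Ioo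
      (fun v hv => (hasDerivAt_stieltjesParam hv.2).hasDerivWithinAt)
      (injOn_stieltjesParam hx hu.1),
    setIntegral_congr_fun measurableSet_Ioo
      (fun v hv => abs_deriv_smul_stieltjesParam α hx hu.1 hv),
    integral_const_mul, hbeta, eulerIntegrand]
  ring

theorem image_one_add_mul_div_Ioo (hs : 0 < s) :
    (fun v : ℝ => (1 + s * v) / (1 + s)) '' Ioo (0 : ℝ) 1 = Ioo (1 / (1 + s)) 1 := by
  have h1 : 0 < 1 + s := by linarith
  ext u
  constructor
  · rintro ⟨v, hv, rfl⟩
    have := mul_pos hs hv.1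
    refine ⟨by simp only; gcongr; linarith, ?_⟩
    simp only
    rw [div_lt_one h1]
    nlinarith [hv.2]
  · rintro ⟨hu0, hu1⟩
    rw [div_lt_iff₀ h1] at hu0
    refine ⟨(u * (1 + s) - 1) / s, ⟨div_pos (by linarith) hs, ?_⟩, ?_⟩
    · rw [div_lt_one hs]
      nlinarith
    · simp only
      field_simp
      ring

theorem integral_stieltjesKernel_left (α : ℂ) (hs : 0 < s) :
    ∫ u in Ioo (0 : ℝ) 1, stieltjesKernel α x u s =
      (s / (1 + s) / (1 + s + x) : ℝ) * ∫ v in Ioo (0 : ℝ) 1, eulerIntegrand α s v := by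
  have h1 : 0 < 1 + s := by linarith
  have hind : (fun u => stieltjesKernel α x u s) = (Ioi (1 / (1 + s))).indicator fun u =>
      (u : ℂ) ^ (-α) * ((1 - u : ℝ) : ℂ) ^ α *
        (((u * (1 + s) - 1 : ℝ) : ℂ) ^ (-α) / ((1 + s + x : ℝ) : ℂ)) := by
    ext u
    have : 1 < u * (1 + s) ↔ u ∈ Ioi (1 / (1 + s)) := by rw [mem_Ioi, div_lt_iff₀ h1]
    simp only [stieltjesKernel, indicator, this]
  have hset : Ioo (0 : ℝ) 1 ∩ Ioi (1 / (1 + s)) = Ioo (1 / (1 + s)) 1 := by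
    have : 0 < 1 / (1 + s) := by positivity
    ext u
    simp only [mem_inter_iff, mem_Ioo, mem_Ioi]
    exact ⟨fun h => ⟨h.2, h.1.2⟩, fun h => ⟨⟨this.trans h.1, h.2⟩, h.1⟩⟩
  rw [hind, setIntegral_indicator measurableSet_Ioi, hset, ← image_one_add_mul_div_Ioo hs,
    integral_image_eq_integral_abs_deriv_smul (f' := fun _ => s / (1 + s)) measurableSet_Ioo
      (fun v _ => ?_) (fun a _ b _ h => ?_), ← integral_const_mul]
  · refine setIntegral_congr_fun measurableSet_Ioo fun v hv => ?_
    have hp := one_add_mul_pos hs.le hv.1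
    have hv1 : 0 < 1 - v := by linarith [hv.2]
    have e1 : 1 - (1 + s * v) / (1 + s) = s * (1 - v) / (1 + s) := by
      field_simp
      ring
    have e2 : (1 + s * v) / (1 + s) * (1 + s) - 1 = s * v := by
      field_simp
      ring
    simp only [eulerIntegrand]
    rw [e1, e2, ofReal_div_cpow hp h1, ofReal_div_cpow (mul_pos hs hv1) h1,
      ofReal_mul_cpow hs hv1, ofReal_mul_cpow hs hv.1, neg_neg, abs_of_nonneg (by positivity),
      Complex.real_smul, Complex.ofReal_div (s / (1 + s))]
    linear_combination ((s / (1 + s) : ℝ) : ℂ) / ((1 + s + x : ℝ) : ℂ) *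
      ((v : ℂ) ^ (-α) * ((1 - v : ℝ) : ℂ) ^ α * ((1 + s * v : ℝ) : ℂ) ^ (-α)) *
      ((((1 + s : ℝ) : ℂ) ^ α * ((1 + s : ℝ) : ℂ) ^ (-α)) *
        ofReal_cpow_mul_cpow_neg hs α + ofReal_cpow_mul_cpow_neg h1 α)
  · have h := ((((hasDerivAt_id v).const_mul s).const_add 1).div_const (1 + s))
    simpa using h.hasDerivWithinAt
  · rw [div_left_inj' h1.ne', add_right_inj, mul_right_inj' hs.ne'] at h
    exact h

theorem norm_stieltjesKernel {α : ℂ} (hre : α.re = 1 / 2) (hx : 0 ≤ x)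
    (hu : u ∈ Ioo (0 : ℝ) 1) (hs : 0 < s) :
    ‖stieltjesKernel α x u s‖ = (stieltjesKernel (1 / 2 : ℝ) x u s).re := by
  unfold stieltjesKernel
  split_ifs with h
  · have h1 : 0 < 1 - u := by linarith [hu.2]
    have h2 : 0 < u * (1 + s) - 1 := by linarith
    have h3 : 0 < 1 + s + x := by linarith
    rw [norm_mul, norm_mul, norm_div, Complex.norm_cpow_eq_rpow_re_of_pos hu.1,
      Complex.norm_cpow_eq_rpow_re_of_pos h1, Complex.norm_cpow_eq_rpow_re_of_pos h2,
      Complex.norm_of_nonneg h3.le, Complex.neg_re, hre, ← Complex.ofReal_neg,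
      ← Complex.ofReal_cpow hu.1.le, ← Complex.ofReal_cpow h1.le, ← Complex.ofReal_cpow h2.le,
      ← Complex.ofReal_div, ← Complex.ofReal_mul, ← Complex.ofReal_mul, Complex.ofReal_re]
  · simp

end Slices

theorem integrable_uncurry_stieltjesKernel {α : ℂ} (hre : α.re = 1 / 2) {x : ℝ} (hx : 0 ≤ x) :
    Integrable (Function.uncurry (stieltjesKernel α x))
      ((volume.restrict (Ioo 0 1)).prod (volume.restrict (Ioi 0))) := by
  refine (integrable_prod_iff
    (measurable_uncurry_stieltjesKernel α x).aestronglyMeasurable).2 ⟨?_, ?_⟩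
  · filter_upwards [ae_restrict_mem measurableSet_Ioo] with u hu
    exact integrableOn_stieltjesKernel (by rw [hre]; norm_num) (by rw [hre]; norm_num) hx hu
  · have hpos : 0 < ((1 / 2 : ℝ) : ℂ).re := by rw [Complex.ofReal_re]; norm_num
    have hlt : ((1 / 2 : ℝ) : ℂ).re < 1 := by rw [Complex.ofReal_re]; norm_num
    have h : IntegrableOn (fun u => (eulerIntegrand (1 / 2 : ℝ) x u *
        (π / Complex.sin (π * (1 / 2 : ℝ)))).re) (Ioo 0 1) :=
      ((integrableOn_eulerIntegrand (by linarith) hlt hx).mul_const _).re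
    refine h.congr_fun (fun u hu => ?_) measurableSet_Ioo
    have hK := integrableOn_stieltjesKernel hpos hlt hx hu
    calc _ = (∫ s in Ioi 0, stieltjesKernel (1 / 2 : ℝ) x u s).re := by
            rw [integral_stieltjesKernel hpos hlt hx hu]
      _ = ∫ s in Ioi 0, (stieltjesKernel (1 / 2 : ℝ) x u s).re := (integral_re hK).symm
      _ = _ := setIntegral_congr_fun measurableSet_Ioi
            fun s hs => (norm_stieltjesKernel hre hx hu hs).symm

theorem integrableOn_FhypC_div {α : ℂ} (hre : α.re = 1 / 2) {x : ℝ} (hx : 0 ≤ x) :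
    IntegrableOn (fun s : ℝ => ((s / (1 + s) / (1 + s + x) : ℝ) : ℂ) * FhypC α s)
      (Ioi 0) := by
  have h := ((integrable_uncurry_stieltjesKernel hre hx).integral_prod_right).const_mul
    (1 / (Complex.Gamma (1 - α) * Complex.Gamma (1 + α)))
  refine IntegrableOn.congr_fun h (fun s hs => ?_) measurableSet_Ioi
  simp only [Function.uncurry]
  rw [integral_stieltjesKernel_left α hs, FhypC_eq_setIntegral]
  ring

/-- The Stieltjes representation of the hypergeometric function. -/
theorem FhypC_eq_stieltjes {α : ℂ} (hre : α.re = 1 / 2) (hsin : Complex.sin (π * α) ≠ 0)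
    {x : ℝ} (hx : 0 ≤ x) :
    FhypC α x = Complex.sin (π * α) / π *
      ∫ s in Ioi (0 : ℝ), ((s / (1 + s) / (1 + s + x) : ℝ) : ℂ) * FhypC α s := by
  have hswap := integral_integral_swap (integrable_uncurry_stieltjesKernel hre hx)
  rw [setIntegral_congr_fun measurableSet_Ioo (fun u hu => integral_stieltjesKernel
      (by rw [hre]; norm_num) (by rw [hre]; norm_num) hx hu), integral_mul_const,
    setIntegral_congr_fun measurableSet_Ioi (fun s hs => integral_stieltjesKernel_left α hs)]
    at hswap
  have hπ : (π : ℂ) ≠ 0 := by exact_mod_cast pi_ne_zero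
  have hc : ∀ s : ℝ, ((s / (1 + s) / (1 + s + x) : ℝ) : ℂ) * FhypC α s =
      1 / (Complex.Gamma (1 - α) * Complex.Gamma (1 + α)) *
        (((s / (1 + s) / (1 + s + x) : ℝ) : ℂ) *
          ∫ v in Ioo (0 : ℝ) 1, eulerIntegrand α s v) := by
    intro s
    rw [FhypC_eq_setIntegral]
    ring
  simp only [hc]
  rw [integral_const_mul, ← hswap, FhypC_eq_setIntegral]
  generalize Complex.sin (π * α) = σ at *
  field_simp

theorem integrableOn_re_FhypC_div {α : ℂ} (hre : α.re = 1 / 2) {x : ℝ} (hx : 0 ≤ x) :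
    IntegrableOn (fun s : ℝ => s / (1 + s) / (1 + s + x) * (FhypC α s).re) (Ioi 0) := by
  have h : IntegrableOn (fun s : ℝ =>
      (((s / (1 + s) / (1 + s + x) : ℝ) : ℂ) * FhypC α s).re) (Ioi 0) :=
    (integrableOn_FhypC_div hre hx).re
  simpa only [Complex.re_ofReal_mul] using h

theorem re_FhypC_eq_stieltjes {α : ℂ} (hre : α.re = 1 / 2) {lam : ℝ} (hlam : lam ≠ 0)
    (hsin : Complex.sin (π * α) = (lam * π : ℝ)) {x : ℝ} (hx : 0 ≤ x) :
    (FhypC α x).re =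
      lam * ∫ s in Ioi (0 : ℝ), s / (1 + s) / (1 + s + x) * (FhypC α s).re := by
  have hne : Complex.sin (π * α) ≠ 0 := by
    rw [hsin]
    exact_mod_cast mul_ne_zero hlam pi_ne_zero
  have hcoef : Complex.sin (π * α) / π = (lam : ℂ) := by
    rw [hsin, ← Complex.ofReal_div, mul_div_cancel_right₀ _ pi_ne_zero]
  have hI : (∫ s in Ioi (0 : ℝ), ((s / (1 + s) / (1 + s + x) : ℝ) : ℂ) * FhypC α s).re =
      ∫ s in Ioi (0 : ℝ), (((s / (1 + s) / (1 + s + x) : ℝ) : ℂ) * FhypC α s).re :=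
    (integral_re (integrableOn_FhypC_div hre hx)).symm
  rw [FhypC_eq_stieltjes hre hne hx, hcoef, Complex.re_ofReal_mul, hI]
  simp only [Complex.re_ofReal_mul]

theorem integrableOn_re_FhypC_div_sq {α : ℂ} (hre : α.re = 1 / 2) {x : ℝ} (hx : 0 ≤ x) :
    IntegrableOn (fun s : ℝ => s * (FhypC α s).re / ((1 + s) ^ 2 * (1 + s + x))) (Ioi 0) := by
  have hbdd : ∀ᵐ s ∂(volume.restrict (Ioi (0 : ℝ))), ‖(1 + s)⁻¹‖ ≤ 1 := by
    filter_upwards [ae_restrict_mem measurableSet_Ioi] with s hs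
    have hs : 0 < s := hs
    rw [norm_inv, Real.norm_of_nonneg (by linarith)]
    exact inv_le_one_of_one_le₀ (by linarith)
  have hmeas : Measurable fun s : ℝ => (1 + s)⁻¹ := by fun_prop
  refine IntegrableOn.congr_fun (Integrable.mul_bdd (integrableOn_re_FhypC_div hre hx)
    hmeas.aestronglyMeasurable hbdd) (fun s hs => ?_) measurableSet_Ioi
  have hs : 0 < s := hs
  have h1 : 1 + s ≠ 0 := by positivity
  have h2 : 1 + s + x ≠ 0 := by positivity
  field_simp

theorem re_FhypC_eq_one_sub {α : ℂ} (hre : α.re = 1 / 2) {lam : ℝ} (hlam : lam ≠ 0)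
    (hsin : Complex.sin (π * α) = (lam * π : ℝ)) {x : ℝ} (hx : 0 ≤ x) :
    (FhypC α x).re = 1 - lam * x *
      ∫ s in Ioi (0 : ℝ), s * (FhypC α s).re / ((1 + s) ^ 2 * (1 + s + x)) := by
  have h0 := re_FhypC_eq_stieltjes hre hlam hsin le_rfl
  rw [FhypC_zero (by rw [hre]; norm_num) (by rw [hre]; norm_num), Complex.one_re] at h0
  rw [re_FhypC_eq_stieltjes hre hlam hsin hx]
  refine Eq.trans ?_ (congrArg (· - _) h0.symm)
  rw [mul_assoc, ← mul_sub, ← integral_const_mul x,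
    ← integral_sub (integrableOn_re_FhypC_div hre le_rfl)
      ((integrableOn_re_FhypC_div_sq hre hx).const_mul x)]
  congr 1
  refine setIntegral_congr_fun measurableSet_Ioi fun s hs => ?_
  have hs : 0 < s := hs
  have h1 : 1 + s ≠ 0 := by positivity
  have h2 : 1 + s + x ≠ 0 := by positivity
  field_simp
  ring

theorem cosh_log_add_sqrt {y : ℝ} (hy : 1 ≤ y) : Real.cosh (_root_.arcosh y) = y := by
  have hsq : Real.sqrt (y ^ 2 - 1) ^ 2 = y ^ 2 - 1 := Real.sq_sqrt (by nlinarith)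
  have hpos : 0 < y + Real.sqrt (y ^ 2 - 1) := by positivity
  have hinv : (y + Real.sqrt (y ^ 2 - 1))⁻¹ = y - Real.sqrt (y ^ 2 - 1) :=
    inv_eq_of_mul_eq_one_right (by linear_combination -hsq)
  rw [_root_.arcosh, Real.cosh_log hpos, hinv]
  ring

theorem sin_pi_mul_half_add_I_mul (a : ℝ) :
    Complex.sin (π * (1 / 2 + Complex.I * (a / π))) = (Real.cosh a : ℝ) := by
  have hπ : (π : ℂ) ≠ 0 := by exact_mod_cast pi_ne_zero
  rw [show (π : ℂ) * (1 / 2 + Complex.I * (a / π)) = a * Complex.I + π / 2 by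
    field_simp; ring, Complex.sin_add_pi_div_two, Complex.cos_mul_I, Complex.ofReal_cosh]

theorem fredholm_solution_strong_coupling (lam : ℝ) (hlam : 1/π ≤ lam)
    (α : ℂ) (hα : α = 1/2 + Complex.I * (_root_.arcosh (lam * π) / π)) :
    (∀ x : ℝ, 0 ≤ x → (FhypC α x).im = 0) ∧
    ∀ μ : ℝ, 0 < μ →
      ∀ J : ℝ → ℝ, (∀ x, J x = x * (FhypC α (x / μ^2)).re) →
      ∀ x : ℝ, 0 ≤ x →
        IntegrableOn (fun t => J t / ((t + μ^2)^2 * (t + μ^2 + x))) (Set.Ioi 0) ∧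
        J x = x - lam * x^2 *
          ∫ t in Set.Ioi (0:ℝ), J t / ((t + μ^2)^2 * (t + μ^2 + x)) := by
  have hlam0 : lam ≠ 0 := ((by positivity : (0 : ℝ) < 1 / π).trans_le hlam).ne'
  have hre : α.re = 1 / 2 := by
    rw [hα, ← Complex.ofReal_div, Complex.add_re, Complex.I_mul_re, Complex.ofReal_im]
    norm_num
  have hsin : Complex.sin (π * α) = (lam * π : ℝ) := by
    rw [hα, sin_pi_mul_half_add_I_mul, cosh_log_add_sqrt ((div_le_iff₀ pi_pos).1 hlam)]
  refine ⟨fun x hx => Complex.conj_eq_iff_im.1 (conj_FhypC hre hx), ?_⟩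
  intro μ hμ J hJ x hx
  have hm : 0 < μ ^ 2 := by positivity
  have hxm : 0 ≤ x / μ ^ 2 := by positivity
  have hscale : EqOn (fun s => J (μ ^ 2 * s) /
        ((μ ^ 2 * s + μ ^ 2) ^ 2 * (μ ^ 2 * s + μ ^ 2 + x)))
      (fun s => (μ ^ 2 * μ ^ 2)⁻¹ *
        (s * (FhypC α s).re / ((1 + s) ^ 2 * (1 + s + x / μ ^ 2)))) (Ioi 0) := by
    intro s hs
    have hs : 0 < s := hs
    have e : μ ^ 2 * s + μ ^ 2 + x = μ ^ 2 * (1 + s + x / μ ^ 2) := by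
      field_simp
      ring
    have h1 : 0 < 1 + s + x / μ ^ 2 := by positivity
    simp only [hJ, mul_div_cancel_left₀ s hm.ne']
    rw [e, show μ ^ 2 * s + μ ^ 2 = μ ^ 2 * (1 + s) by ring]
    generalize 1 + s + x / μ ^ 2 = c at *
    field_simp
  constructor
  · have h := (integrableOn_Ioi_comp_mul_left_iff
      (fun t => J t / ((t + μ ^ 2) ^ 2 * (t + μ ^ 2 + x))) 0 hm).1
      (IntegrableOn.congr_fun ((integrableOn_re_FhypC_div_sq hre hxm).const_mul _)
        hscale.symm measurableSet_Ioi)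
    rwa [mul_zero] at h
  · have h := integral_comp_mul_left_Ioi
      (fun t => J t / ((t + μ ^ 2) ^ 2 * (t + μ ^ 2 + x))) 0 hm
    rw [setIntegral_congr_fun measurableSet_Ioi hscale, integral_const_mul, mul_zero,
      smul_eq_mul, mul_inv, mul_assoc, mul_right_inj' (inv_ne_zero hm.ne')] at h
    rw [hJ, re_FhypC_eq_one_sub hre hlam0 hsin hxm, ← h]
    field_simp
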